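/- Dragon tail to blue cycle via binary search: suppose the board contains a dragon tail of length m > k ≥ 3 whose first blue edge is u₀u₁. Then within fewer than log₂ m + 8 rounds Builder can force a red C_k or a blue cycle on more than m − k but at most m + 1 vertices of the dragon tail, which moreover contains the edge u₀u₁. -/

import Mathlib

open SimpleGraph

/-- A board state: the set of red edges and the set of blue edges. -/
abbrev Board : Type := Set (Sym2 ℕ) × Set (Sym2 ℕ)

/-- The set of already colored edges of a board. -/
def Board.colored (B : Board) : Set (Sym2 ℕ) := B.1 ∪ B.2

/-- A Builder strategy selects an edge given the current board. -/
abbrev BuilderStrat : Type := Board → Sym2 ℕ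

/-- A Painter strategy colors the selected edge (true = red, false = blue). -/
abbrev PainterStrat : Type := Board → Sym2 ℕ → Bool

/-- The board after `t` rounds of play from `init`. -/
def playGame (b : BuilderStrat) (p : PainterStrat) (init : Board) : ℕ → Board
  | 0 => init
  | t + 1 =>
      let B := playGame b p init t
      let e := b B
      if p B e then (insert e B.1, B.2) else (B.1, insert e B.2)

/-- Builder's strategy is valid from `init`: along any play it always selects a
previously unselected non-loop edge. -/
def ValidFrom (b : BuilderStrat) (init : Board) : Prop :=
  ∀ p : PainterStrat, ∀ t : ℕ,
    ¬ (b (playGame b p init t)).IsDiag ∧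
      b (playGame b p init t) ∉ (playGame b p init t).colored

/-- Builder can force the winning condition `W` within `t` rounds, starting from `init`. -/
def BuilderWinsIn (init : Board) (W : Board → Prop) (t : ℕ) : Prop :=
  ∃ b : BuilderStrat, ValidFrom b init ∧
    ∀ p : PainterStrat, ∃ s, s ≤ t ∧ W (playGame b p init s)

/-- `G` contains a copy of `H`. -/
def HasCopy {α β : Type} (H : SimpleGraph α) (G : SimpleGraph β) : Prop :=
  ∃ f : α ↪ β, ∀ x y, H.Adj x y → G.Adj (f x) (f y)

/-- The red part of the board contains a copy of `H`. -/
def RedCopy {α : Type} (H : SimpleGraph α) (B : Board) : Prop :=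
  HasCopy H (fromEdgeSet B.1)

/-- The blue part of the board contains a copy of `H`. -/
def BlueCopy {α : Type} (H : SimpleGraph α) (B : Board) : Prop :=
  HasCopy H (fromEdgeSet B.2)

/-- The empty board. -/
def emptyBoard : Board := (∅, ∅)

/-- Winning condition: a red `C_k` or a blue `C_n`. -/
def WinCC (k n : ℕ) (B : Board) : Prop :=
  RedCopy (cycleGraph k) B ∨ BlueCopy (cycleGraph n) B

/-- Winning condition: a red `C_k` or a blue path on `n` vertices. -/
def WinCP (k n : ℕ) (B : Board) : Prop :=
  RedCopy (cycleGraph k) B ∨ BlueCopy (pathGraph n) B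

/-- A board consisting of a single blue cycle on the vertices `0, …, m-1`. -/
def blueCycleBoard (m : ℕ) : Board :=
  (∅, {e | ∃ i : ℕ, i < m ∧ e = s(i, (i + 1) % m)})

/-- A board consisting of a single blue path on the vertices `0, …, m-1`. -/
def bluePathBoard (m : ℕ) : Board :=
  (∅, {e | ∃ i : ℕ, i + 1 < m ∧ e = s(i, i + 1)})

/-- Builder can reach `W` within `n` rounds, by backward induction on the game tree. -/
def Forces (W : Board → Prop) : ℕ → Board → Prop
  | 0, B => W B
  | n + 1, B => W B ∨ ∃ e : Sym2 ℕ, ¬ e.IsDiag ∧ e ∉ B.colored ∧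
      Forces W n (insert e B.1, B.2) ∧ Forces W n (B.1, insert e B.2)

theorem Forces.of_win {W : Board → Prop} {B : Board} (h : W B) : ∀ n, Forces W n B
  | 0 => h
  | _ + 1 => Or.inl h

theorem Forces.succ {W : Board → Prop} :
    ∀ {n : ℕ} {B : Board}, Forces W n B → Forces W (n + 1) B
  | 0, _, h => Or.inl h
  | _ + 1, _, h => h.imp id fun ⟨e, hd, hc, hr, hb⟩ => ⟨e, hd, hc, hr.succ, hb.succ⟩

theorem Forces.mono {W : Board → Prop} {n n' : ℕ} {B : Board} (h : Forces W n B)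
    (hn : n ≤ n') : Forces W n' B := by
  induction hn with
  | refl => exact h
  | step _ ih => exact ih.succ

/-- Builder may ask for any edge, possibly an already colored one. -/
theorem Forces.ask {W : Board → Prop} {n : ℕ} {B : Board} {e : Sym2 ℕ} (he : ¬ e.IsDiag)
    (hr : ∀ B', B ≤ B' → e ∈ B'.1 → Forces W n B')
    (hb : ∀ B', B ≤ B' → e ∈ B'.2 → Forces W n B') : Forces W (n + 1) B := by
  by_cases hc : e ∈ B.colored
  · rcases hc with hc | hc
    · exact (hr B le_rfl hc).succ
    · exact (hb B le_rfl hc).succ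
  · exact Or.inr ⟨e, he, hc,
      hr _ ⟨Set.subset_insert _ _, subset_rfl⟩ (Set.mem_insert _ _),
      hb _ ⟨subset_rfl, Set.subset_insert _ _⟩ (Set.mem_insert _ _)⟩

/-- The moves after which `W` can be forced within `n` further rounds. -/
def GoodMove (W : Board → Prop) (B : Board) (n : ℕ) (e : Sym2 ℕ) : Prop :=
  ¬ e.IsDiag ∧ e ∉ B.colored ∧
    Forces W n (insert e B.1, B.2) ∧ Forces W n (B.1, insert e B.2)

theorem GoodMove.mono {W : Board → Prop} {B : Board} {n n' : ℕ} {e : Sym2 ℕ}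
    (h : GoodMove W B n e) (hn : n ≤ n') : GoodMove W B n' e :=
  ⟨h.1, h.2.1, h.2.2.1.mono hn, h.2.2.2.mono hn⟩

open Classical in
/-- Play a good move that wins as fast as possible; if there is none, play any legal move. -/
noncomputable def fastestStrat (W : Board → Prop) : BuilderStrat := fun B =>
  if h : ∃ n e, GoodMove W B n e then (Nat.find_spec h).choose
  else if h : ∃ e : Sym2 ℕ, ¬ e.IsDiag ∧ e ∉ B.colored then h.choose
  else s(0, 0)

open Classical in
theorem fastestStrat_good {W : Board → Prop} {B : Board} {n : ℕ} {e : Sym2 ℕ}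
    (he : GoodMove W B n e) : GoodMove W B n (fastestStrat W B) := by
  have h : ∃ n e, GoodMove W B n e := ⟨n, e, he⟩
  rw [fastestStrat, dif_pos h]
  exact (Nat.find_spec h).choose_spec.mono (Nat.find_min' h ⟨e, he⟩)

theorem exists_legal_move {B : Board} (hB : B.colored.Finite) :
    ∃ e : Sym2 ℕ, ¬ e.IsDiag ∧ e ∉ B.colored := by
  have hinj : Function.Injective fun n : ℕ => s(0, n + 1) := fun a b h => by
    simpa using h
  obtain ⟨_, ⟨n, rfl⟩, hn⟩ := (Set.infinite_range_of_injective hinj).exists_notMem_finite hB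
  exact ⟨_, by simp, hn⟩

theorem fastestStrat_legal (W : Board → Prop) {B : Board} (hB : B.colored.Finite) :
    ¬ (fastestStrat W B).IsDiag ∧ fastestStrat W B ∉ B.colored := by
  by_cases h : ∃ n e, GoodMove W B n e
  · obtain ⟨n, e, he⟩ := h
    exact ⟨(fastestStrat_good he).1, (fastestStrat_good he).2.1⟩
  · rw [fastestStrat, dif_neg h, dif_pos (exists_legal_move hB)]
    exact (exists_legal_move hB).choose_spec

theorem playGame_colored_finite (b : BuilderStrat) (p : PainterStrat) {init : Board}
    (h : init.colored.Finite) (t : ℕ) : (playGame b p init t).colored.Finite := by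
  induction t with
  | zero => exact h
  | succ t ih =>
    refine (ih.insert (b (playGame b p init t))).subset ?_
    simp only [playGame, Board.colored]
    split_ifs <;> intro x hx <;> simp only [Set.mem_union, Set.mem_insert_iff] at hx ⊢ <;> tauto

theorem Forces.builderWinsIn {W : Board → Prop} {n : ℕ} {init : Board}
    (hfin : init.colored.Finite) (h : Forces W n init) : BuilderWinsIn init W n := by
  refine ⟨fastestStrat W,
    fun p t => fastestStrat_legal W (playGame_colored_finite _ p hfin t), fun p => ?_⟩
  have key : ∀ n s, Forces W n (playGame (fastestStrat W) p init s) →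
      ∃ s', s' ≤ s + n ∧ W (playGame (fastestStrat W) p init s') := by
    intro n
    induction n with
    | zero => exact fun s hs => ⟨s, le_rfl, hs⟩
    | succ n ih =>
      rintro s (hs | ⟨e, he⟩)
      · exact ⟨s, by omega, hs⟩
      · obtain ⟨-, -, hr, hb⟩ := fastestStrat_good he
        obtain ⟨s', hs', hW⟩ := ih (s + 1) (by
          simp only [playGame]
          split_ifs
          · exact hr
          · exact hb)
        exact ⟨s', by omega, hW⟩
  simpa using key n 0 h

/-- The vertices `g 0, …, g (ℓ - 1)` form, in this order, a cycle with edges in `E`. -/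
structure IsCycleIn (E : Set (Sym2 ℕ)) (ℓ : ℕ) (g : ℕ → ℕ) : Prop where
  inj : ∀ a c, a < ℓ → c < ℓ → g a = g c → a = c
  step : ∀ j, j + 1 < ℓ → s(g j, g (j + 1)) ∈ E
  close : s(g (ℓ - 1), g 0) ∈ E

theorem IsCycleIn.redCopy {B : Board} {k : ℕ} {g : ℕ → ℕ} (hk : 2 ≤ k)
    (h : IsCycleIn B.1 k g) : RedCopy (cycleGraph k) B := by
  obtain ⟨n, rfl⟩ : ∃ n, k = n + 2 := ⟨k - 2, by omega⟩
  have hinj : Function.Injective fun x : Fin (n + 2) => g x :=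
    fun x y hxy => Fin.ext (h.inj _ _ x.2 y.2 hxy)
  have hsucc : ∀ x : Fin (n + 2), s(g x, g (x + 1 : Fin (n + 2))) ∈ B.1 := by
    intro x
    rw [Fin.val_add_one]
    split_ifs with hx
    · subst hx
      exact h.close
    · refine h.step _ ?_
      have := Fin.val_lt_last hx
      omega
  refine ⟨⟨_, hinj⟩, fun x y hxy => ?_⟩
  rw [fromEdgeSet_adj]
  refine ⟨?_, fun e => hxy.ne (hinj e)⟩
  rcases cycleGraph_adj.1 hxy with e | e
  · obtain rfl : x = y + 1 := by rw [← e]; abel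
    rw [Sym2.eq_swap]
    exact hsucc y
  · obtain rfl : y = x + 1 := by rw [← e]; abel
    exact hsucc x

/-- The board contains a dragon tail of length `m` with red path `p 0, p 1, …, p (2 * m)`. -/
structure DragonTail (m : ℕ) (p : ℕ → ℕ) (B : Board) : Prop where
  inj : ∀ x y, x ≤ 2 * m → y ≤ 2 * m → p x = p y → x = y
  red : ∀ j, j < 2 * m → s(p j, p (j + 1)) ∈ B.1
  blue : ∀ j, j < m → s(p (2 * j), p (2 * j + 2)) ∈ B.2

/-- A red `C_k`, or a blue cycle on more than `m - k` and at most `m + 1` vertices of the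
dragon tail that contains its first blue edge. -/
def DragonWin (k m : ℕ) (p : ℕ → ℕ) (B : Board) : Prop :=
  RedCopy (cycleGraph k) B ∨
    ∃ (ℓ : ℕ) (σ : ℕ → ℕ), m - k < ℓ ∧ ℓ ≤ m + 1 ∧ (∀ a, a < ℓ → σ a ≤ 2 * m) ∧
      IsCycleIn B.2 ℓ (fun a => p (σ a)) ∧
      ∃ a, a < ℓ ∧ ((σ a = 0 ∧ σ ((a + 1) % ℓ) = 2) ∨ (σ a = 2 ∧ σ ((a + 1) % ℓ) = 0))

theorem edge_mem_of_eq {E : Set (Sym2 ℕ)} {p : ℕ → ℕ} {a b x y : ℕ} (h : s(p a, p b) ∈ E)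
    (hxy : x = a ∧ y = b ∨ x = b ∧ y = a) : s(p x, p y) ∈ E := by
  rcases hxy with ⟨rfl, rfl⟩ | ⟨rfl, rfl⟩
  · exact h
  · rwa [Sym2.eq_swap]

namespace DragonTail

variable {k m : ℕ} {p : ℕ → ℕ} {B B' : Board}

theorem mono (h : DragonTail m p B) (hB : B ≤ B') : DragonTail m p B' :=
  ⟨h.inj, fun j hj => hB.1 (h.red j hj), fun j hj => hB.2 (h.blue j hj)⟩

theorem not_isDiag (h : DragonTail m p B) {x y : ℕ} (hx : x ≤ 2 * m) (hy : y ≤ 2 * m)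
    (hxy : x ≠ y) : ¬ s(p x, p y).IsDiag := by
  rw [Sym2.mk_isDiag_iff]
  exact fun e => hxy (h.inj x y hx hy e)

theorem red_mem (h : DragonTail m p B) {x y : ℕ} (hx : x ≤ 2 * m) (hy : y ≤ 2 * m)
    (hxy : y = x + 1 ∨ x = y + 1) : s(p x, p y) ∈ B.1 := by
  rcases hxy with rfl | rfl
  · exact h.red x (by omega)
  · rw [Sym2.eq_swap]
    exact h.red y (by omega)

theorem blue_mem (h : DragonTail m p B) {x y : ℕ} (hx : x ≤ 2 * m) (hy : y ≤ 2 * m)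
    (hxy : x % 2 = 0 ∧ (y = x + 2 ∨ x = y + 2)) : s(p x, p y) ∈ B.2 := by
  obtain ⟨h2, rfl | rfl⟩ := hxy
  · exact edge_mem_of_eq (h.blue (x / 2) (by omega)) (by omega)
  · exact edge_mem_of_eq (h.blue (y / 2) (by omega)) (by omega)

/-- A vertex with red edges to both ends of a red path on `k - 1` vertices. -/
theorem win_of_red_fan (h : DragonTail m p B) {x a b : ℕ} (hk : 3 ≤ k) (hab : b + 2 = a + k)
    (hb : b ≤ 2 * m) (hx : x ≤ 2 * m) (hxab : x < a ∨ b < x)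
    (ha_red : s(p x, p a) ∈ B.1) (hb_red : s(p x, p b) ∈ B.1) : DragonWin k m p B := by
  let σ : ℕ → ℕ := fun j => if j = 0 then x else a + (j - 1)
  have hσ : ∀ j, σ j = if j = 0 then x else a + (j - 1) := fun _ => rfl
  refine Or.inl (IsCycleIn.redCopy (g := fun j => p (σ j)) (by omega) ⟨?_, ?_, ?_⟩)
  · intro i j hi hj e
    have := h.inj _ _ (by rw [hσ]; split_ifs <;> omega) (by rw [hσ]; split_ifs <;> omega) e
    rw [hσ, hσ] at this
    split_ifs at this <;> omega
  · intro j hj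
    have e₁ := hσ j
    have e₂ := hσ (j + 1)
    rcases Nat.eq_zero_or_pos j with rfl | hj0
    · exact edge_mem_of_eq ha_red (by grind)
    · apply h.red_mem <;> grind
  · exact edge_mem_of_eq hb_red (by simp only [hσ]; split_ifs <;> omega)

/-- Two disjoint red paths `a, …, b` and `c, …, d`, with red edges `0 b`, `a c` and `d 0`. -/
theorem win_of_red_two_paths (h : DragonTail m p B) {a b c d : ℕ} (ha : 0 < a) (hab : a ≤ b)
    (hbc : b < c) (hcd : c ≤ d) (hd : d ≤ 2 * m) (hlen : (b - a) + (d - c) + 3 = k)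
    (hb_red : s(p 0, p b) ∈ B.1) (hac_red : s(p a, p c) ∈ B.1) (hd_red : s(p 0, p d) ∈ B.1) :
    DragonWin k m p B := by
  let σ : ℕ → ℕ := fun j =>
    if j = 0 then 0 else if j ≤ b - a + 1 then b - (j - 1) else c + (j - (b - a + 2))
  have hσ : ∀ j, σ j = if j = 0 then 0 else if j ≤ b - a + 1 then b - (j - 1)
      else c + (j - (b - a + 2)) := fun _ => rfl
  refine Or.inl (IsCycleIn.redCopy (g := fun j => p (σ j)) (by omega) ⟨?_, ?_, ?_⟩)
  · intro i j hi hj e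
    have := h.inj _ _ (by rw [hσ]; split_ifs <;> omega) (by rw [hσ]; split_ifs <;> omega) e
    rw [hσ, hσ] at this
    split_ifs at this <;> omega
  · intro j hj
    have e₁ := hσ j
    have e₂ := hσ (j + 1)
    rcases Nat.eq_zero_or_pos j with rfl | hj0
    · exact edge_mem_of_eq hb_red (by grind)
    · by_cases hj1 : j = b - a + 1
      · exact edge_mem_of_eq hac_red (by grind)
      · apply h.red_mem <;> grind
  · exact edge_mem_of_eq hd_red (by simp only [hσ]; split_ifs <;> omega)

theorem win_of_blue_chord (h : DragonTail m p B) {j : ℕ} (hj0 : 1 ≤ j) (hjm : j ≤ m)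
    (hj : m - k ≤ j) (hblue : s(p 0, p (2 * j)) ∈ B.2) : DragonWin k m p B := by
  refine Or.inr ⟨j + 1, fun a => 2 * a, by omega, by omega, fun a ha => by dsimp only; omega,
    ⟨?_, ?_, ?_⟩, 0, by omega, Or.inl ⟨rfl, ?_⟩⟩ <;> dsimp only
  · intro a c ha hc e
    have := h.inj _ _ (by omega) (by omega) e
    omega
  · intro a ha
    apply h.blue_mem <;> omega
  · exact edge_mem_of_eq hblue (by omega)
  · rw [Nat.mod_eq_of_lt (by omega)]

/-- The blue cycle `u 0, u i, u (i + 1), …, u M, u (i - 1), …, u 1`. -/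
theorem win_of_blue_crossing (h : DragonTail m p B) {i M : ℕ} (hi : 2 ≤ i) (hiM : i < M)
    (hMm : M ≤ m) (hM : m - k ≤ M) (h0 : s(p 0, p (2 * i)) ∈ B.2)
    (h1 : s(p (2 * i - 2), p (2 * M)) ∈ B.2) : DragonWin k m p B := by
  let σ : ℕ → ℕ := fun j =>
    if j = 0 then 0 else if j ≤ M - i + 1 then 2 * (i + (j - 1)) else 2 * (M + 1 - j)
  have hσ : ∀ j, σ j = if j = 0 then 0 else if j ≤ M - i + 1 then 2 * (i + (j - 1))
      else 2 * (M + 1 - j) := fun _ => rfl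
  refine Or.inr ⟨M + 1, σ, by omega, by omega, ?_, ⟨?_, ?_, ?_⟩, M, by omega, Or.inr ⟨?_, ?_⟩⟩
  · intro a ha
    rw [hσ]
    split_ifs <;> omega
  · intro a c ha hc e
    have := h.inj _ _ (by rw [hσ]; split_ifs <;> omega) (by rw [hσ]; split_ifs <;> omega) e
    rw [hσ, hσ] at this
    split_ifs at this <;> omega
  · intro j hj
    have e₁ := hσ j
    have e₂ := hσ (j + 1)
    rcases Nat.eq_zero_or_pos j with rfl | hj0
    · exact edge_mem_of_eq h0 (by grind)
    · by_cases hj1 : j = M - i + 1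
      · exact edge_mem_of_eq h1 (by grind)
      · apply h.blue_mem <;> grind
  · apply h.blue_mem <;> simp only [hσ] <;> split_ifs <;> omega
  · rw [hσ]
    split_ifs <;> omega
  · rw [Nat.mod_self, hσ, if_pos rfl]

/-- The blue cycle `u 0, …, u (i - 1), u (i + 1), …, u m, u i`. -/
theorem win_of_blue_skip (h : DragonTail m p B) {i : ℕ} (hi : 2 ≤ i) (him : i < m)
    (h0 : s(p 0, p (2 * i)) ∈ B.2) (h1 : s(p (2 * i - 2), p (2 * i + 2)) ∈ B.2)
    (h2 : s(p (2 * i), p (2 * m)) ∈ B.2) : DragonWin k m p B := by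
  let σ : ℕ → ℕ := fun j => if j < i then 2 * j else if j < m then 2 * (j + 1) else 2 * i
  have hσ : ∀ j, σ j = if j < i then 2 * j else if j < m then 2 * (j + 1) else 2 * i :=
    fun _ => rfl
  refine Or.inr ⟨m + 1, σ, by omega, by omega, ?_, ⟨?_, ?_, ?_⟩, 0, by omega, Or.inl ⟨?_, ?_⟩⟩
  · intro a ha
    rw [hσ]
    split_ifs <;> omega
  · intro a c ha hc e
    have := h.inj _ _ (by rw [hσ]; split_ifs <;> omega) (by rw [hσ]; split_ifs <;> omega) e
    rw [hσ, hσ] at this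
    split_ifs at this <;> omega
  · intro j hj
    have e₁ := hσ j
    have e₂ := hσ (j + 1)
    by_cases hj1 : j = i - 1
    · exact edge_mem_of_eq h1 (by grind)
    · by_cases hj2 : j = m - 1
      · exact edge_mem_of_eq h2 (by grind)
      · apply h.blue_mem <;> grind
  · exact edge_mem_of_eq h0 (by simp only [hσ]; split_ifs <;> omega)
  · rw [hσ]
    split_ifs <;> omega
  · rw [Nat.mod_eq_of_lt (by omega), hσ]
    split_ifs <;> omega

/-- The blue cycle `u 0, …, u M, w i, w (i + 1)`. -/
theorem win_of_blue_detour (h : DragonTail m p B) {i M : ℕ} (hi : 1 ≤ i) (hiM : i < M)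
    (hMm : M + 2 = m) (h0 : s(p (2 * i - 1), p (2 * M)) ∈ B.2)
    (h1 : s(p (2 * i - 1), p (2 * i + 1)) ∈ B.2) (h2 : s(p 0, p (2 * i + 1)) ∈ B.2) :
    DragonWin k m p B := by
  let σ : ℕ → ℕ := fun j =>
    if j ≤ M then 2 * j else if j = M + 1 then 2 * i - 1 else 2 * i + 1
  have hσ : ∀ j, σ j = if j ≤ M then 2 * j else if j = M + 1 then 2 * i - 1 else 2 * i + 1 :=
    fun _ => rfl
  refine Or.inr ⟨m + 1, σ, by omega, by omega, ?_, ⟨?_, ?_, ?_⟩, 0, by omega, Or.inl ⟨?_, ?_⟩⟩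
  · intro a ha
    rw [hσ]
    split_ifs <;> omega
  · intro a c ha hc e
    have := h.inj _ _ (by rw [hσ]; split_ifs <;> omega) (by rw [hσ]; split_ifs <;> omega) e
    rw [hσ, hσ] at this
    split_ifs at this <;> omega
  · intro j hj
    have e₁ := hσ j
    have e₂ := hσ (j + 1)
    by_cases hj1 : j = M
    · exact edge_mem_of_eq h0 (by grind)
    · by_cases hj2 : j = M + 1
      · exact edge_mem_of_eq h1 (by grind)
      · apply h.blue_mem <;> grind
  · exact edge_mem_of_eq h2 (by simp only [hσ]; split_ifs <;> omega)
  · rw [hσ]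
    split_ifs <;> omega
  · rw [Nat.mod_eq_of_lt (by omega), hσ]
    split_ifs <;> omega

/-- Binary search for consecutive `u i`, `u (i + 1)` joined to `u 0` by a blue and a red edge. -/
theorem forces_of_search {W : Board → Prop} {r lo hi : ℕ} (n : ℕ) (h : DragonTail m p B)
    (hlo0 : 1 ≤ lo) (hlt : lo < hi) (hlen : hi - lo ≤ 2 ^ n) (him : hi ≤ m)
    (hlo : s(p 0, p (2 * lo)) ∈ B.2) (hhi : s(p 0, p (2 * hi)) ∈ B.1)
    (hfin : ∀ i B', lo ≤ i → i < hi → B ≤ B' → s(p 0, p (2 * i)) ∈ B'.2 →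
      s(p 0, p (2 * i + 2)) ∈ B'.1 → Forces W r B') : Forces W (r + n) B := by
  induction n generalizing lo hi B with
  | zero =>
    obtain rfl : hi = lo + 1 := by simp at hlen; omega
    exact hfin lo B le_rfl hlt le_rfl hlo hhi
  | succ n ih =>
    by_cases hadj : hi = lo + 1
    · subst hadj
      exact (hfin lo B le_rfl hlt le_rfl hlo hhi).mono (by omega)
    · rw [pow_succ] at hlen
      refine Forces.ask (e := s(p 0, p (2 * ((lo + hi) / 2))))
        (h.not_isDiag (by omega) (by omega) (by omega)) (fun B' hB he => ?_) fun B' hB he => ?_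
      · exact ih (h.mono hB) hlo0 (by omega) (by omega) (by omega) (hB.2 hlo) he
          fun i B'' h1 h2 hB' => hfin i B'' h1 (by omega) (hB.trans hB')
      · exact ih (h.mono hB) (by omega) (by omega) (by omega) him he (hB.1 hhi)
          fun i B'' h1 h2 hB' => hfin i B'' (by omega) h2 (hB.trans hB')

theorem forces_of_even (h : DragonTail m p B) (hk : 3 ≤ k) (hm : k < m) (heven : k % 2 = 0) :
    Forces (DragonWin k m p) 2 B := by
  refine Forces.ask (e := s(p 0, p (2 * m)))
    (h.not_isDiag (by omega) (by omega) (by omega)) (fun B₁ hB₁ h₁ => ?_)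
    fun B₁ hB₁ h₁ => .of_win ((h.mono hB₁).win_of_blue_chord (by omega) le_rfl (by omega) h₁) _
  have t₁ := h.mono hB₁
  refine Forces.ask (e := s(p 0, p (2 * (m - (k / 2 - 1)))))
    (h.not_isDiag (by omega) (by omega) (by omega)) (fun B₂ hB₂ h₂ => ?_)
    fun B₂ hB₂ h₂ => .of_win
      ((t₁.mono hB₂).win_of_blue_chord (by omega) (by omega) (by omega) h₂) _
  exact .of_win ((t₁.mono hB₂).win_of_red_fan (b := 2 * m) hk (by omega) (by omega) (by omega)
    (by omega) h₂ (hB₂.1 h₁)) _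

theorem forces_endgame_three (h : DragonTail m p B) {i M : ℕ} (hM : M + 2 = m) (hi : 1 ≤ i)
    (hiM : i < M) (h0M : s(p 0, p (2 * M)) ∈ B.1) (h0i : s(p 0, p (2 * i)) ∈ B.2)
    (h0j : s(p 0, p (2 * i + 2)) ∈ B.1) : Forces (DragonWin 3 m p) 4 B := by
  refine Forces.ask (e := s(p 0, p (2 * i + 1)))
    (h.not_isDiag (by omega) (by omega) (by omega)) (fun B₁ hB₁ h₁ => ?_) fun B₁ hB₁ h₁ => ?_
  · exact .of_win ((h.mono hB₁).win_of_red_fan le_rfl (by omega) (by omega) (by omega) (by omega)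
      h₁ (hB₁.1 h0j)) _
  have t₁ := h.mono hB₁
  refine Forces.ask (e := s(p (2 * i - 1), p (2 * i + 1)))
    (h.not_isDiag (by omega) (by omega) (by omega)) (fun B₂ hB₂ h₂ => ?_) fun B₂ hB₂ h₂ => ?_
  · exact .of_win ((t₁.mono hB₂).win_of_red_fan (x := 2 * i + 1) (a := 2 * i - 1) (b := 2 * i)
      le_rfl (by omega) (by omega) (by omega) (by omega) (edge_mem_of_eq h₂ (by omega))
      ((t₁.mono hB₂).red_mem (by omega) (by omega) (by omega))) _
  have t₂ := t₁.mono hB₂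
  have hB := hB₁.trans hB₂
  have finish : ∀ B', B₂ ≤ B' → s(p (2 * i - 2), p (2 * M)) ∈ B'.1 →
      Forces (DragonWin 3 m p) 1 B' := by
    intro B' hB' h₃
    have t₃ := t₂.mono hB'
    refine Forces.ask (e := s(p (2 * i - 1), p (2 * M)))
      (h.not_isDiag (by omega) (by omega) (by omega)) (fun B₄ hB₄ h₄ => ?_) fun B₄ hB₄ h₄ => ?_
    · exact .of_win ((t₃.mono hB₄).win_of_red_fan (x := 2 * M) (a := 2 * i - 2) (b := 2 * i - 1)
        le_rfl (by omega) (by omega) (by omega) (by omega)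
        (edge_mem_of_eq (hB₄.1 h₃) (by omega)) (edge_mem_of_eq h₄ (by omega))) _
    · exact .of_win ((t₃.mono hB₄).win_of_blue_detour hi hiM hM h₄
        (hB₄.2 (hB'.2 h₂)) (hB₄.2 (hB'.2 (hB₂.2 h₁)))) _
  by_cases hi1 : i = 1
  · subst hi1
    exact (finish B₂ le_rfl (hB.1 h0M)).succ
  refine Forces.ask (e := s(p (2 * i - 2), p (2 * M)))
    (h.not_isDiag (by omega) (by omega) (by omega)) finish fun B₃ hB₃ h₃ => ?_
  exact .of_win ((t₂.mono hB₃).win_of_blue_crossing (by omega) hiM (by omega) (by omega)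
    (hB₃.2 (hB.2 h0i)) h₃) _

theorem forces_endgame_five (h : DragonTail m p B) {i : ℕ} (hi : 2 ≤ i) (him : i + 1 < m)
    (h0m : s(p 0, p (2 * m)) ∈ B.1) (h0i : s(p 0, p (2 * i)) ∈ B.2)
    (h0j : s(p 0, p (2 * i + 2)) ∈ B.1) : Forces (DragonWin 5 m p) 2 B := by
  refine Forces.ask (e := s(p (2 * i), p (2 * m)))
    (h.not_isDiag (by omega) (by omega) (by omega)) (fun B₁ hB₁ h₁ => ?_) fun B₁ hB₁ h₁ => ?_
  · exact .of_win ((h.mono hB₁).win_of_red_two_paths (by omega) (by omega) (by omega) le_rfl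
      le_rfl (by omega) (hB₁.1 h0j) h₁ (hB₁.1 h0m)) _
  have t₁ := h.mono hB₁
  refine Forces.ask (e := s(p (2 * i - 2), p (2 * i + 2)))
    (h.not_isDiag (by omega) (by omega) (by omega)) (fun B₂ hB₂ h₂ => ?_) fun B₂ hB₂ h₂ => ?_
  · exact .of_win ((t₁.mono hB₂).win_of_red_fan (a := 2 * i - 1) (by omega) (by omega)
      (by omega) (by omega) (by omega)
      ((t₁.mono hB₂).red_mem (by omega) (by omega) (by omega)) h₂) _
  · exact .of_win ((t₁.mono hB₂).win_of_blue_skip hi (by omega) (hB₂.2 (hB₁.2 h0i)) h₂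
      (hB₂.2 h₁)) _

theorem forces_endgame_odd (h : DragonTail m p B) {i : ℕ} (hk : 7 ≤ k) (hodd : k % 2 = 1)
    (hm : k < m) (hi : 2 ≤ i) (him : i < m - k) (h0m : s(p 0, p (2 * m)) ∈ B.1)
    (h0i : s(p 0, p (2 * i)) ∈ B.2) (h0j : s(p 0, p (2 * i + 2)) ∈ B.1) :
    Forces (DragonWin k m p) 1 B := by
  refine Forces.ask (e := s(p (2 * i - 2), p (2 * (m - (k - 7) / 2))))
    (h.not_isDiag (by omega) (by omega) (by omega)) (fun B₁ hB₁ h₁ => ?_) fun B₁ hB₁ h₁ => ?_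
  · exact .of_win ((h.mono hB₁).win_of_red_two_paths (by omega) (by omega) (by omega) (by omega)
      le_rfl (by omega) (hB₁.1 h0j) h₁ (hB₁.1 h0m)) _
  · exact .of_win ((h.mono hB₁).win_of_blue_crossing hi (by omega) (by omega) (by omega)
      (hB₁.2 h0i) h₁) _

theorem forces_endgame (h : DragonTail m p B) {i M : ℕ} (hk : 3 ≤ k) (hodd : k % 2 = 1)
    (hm : k < m) (hM : M = if k = 3 then m - 2 else m) (hi : (k - 1) / 2 ≤ i) (hiM : i < M)
    (h0M : s(p 0, p (2 * M)) ∈ B.1) (h0i : s(p 0, p (2 * i)) ∈ B.2)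
    (h0j : s(p 0, p (2 * i + 2)) ∈ B.1) : Forces (DragonWin k m p) 4 B := by
  by_cases him : m - k ≤ i
  · exact .of_win (h.win_of_blue_chord (by omega) (by split_ifs at hM <;> omega) him h0i) _
  split_ifs at hM with hk3
  · subst hk3
    exact h.forces_endgame_three (by omega) (by omega) hiM h0M h0i h0j
  · subst hM
    by_cases hk5 : k = 5
    · subst hk5
      exact (h.forces_endgame_five (by omega) (by omega) h0M h0i h0j).mono (by omega)
    · exact (h.forces_endgame_odd (by omega) hodd hm (by omega) (by omega) h0M h0i h0j).mono
        (by omega)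

theorem forces_of_odd (h : DragonTail m p B) (hk : 3 ≤ k) (hm : k < m) (hodd : k % 2 = 1) :
    Forces (DragonWin k m p) (Nat.log 2 m + 7) B := by
  obtain ⟨M, hM⟩ : ∃ M, M = if k = 3 then m - 2 else m := ⟨_, rfl⟩
  have hMm : M ≤ m ∧ m - k ≤ M ∧ (k - 1) / 2 < M := by split_ifs at hM <;> omega
  refine Forces.ask (e := s(p 0, p (2 * M)))
    (h.not_isDiag (by omega) (by omega) (by omega)) (fun B₁ hB₁ h₁ => ?_)
    fun B₁ hB₁ h₁ => .of_win
      ((h.mono hB₁).win_of_blue_chord (by omega) hMm.1 hMm.2.1 h₁) _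
  have t₁ := h.mono hB₁
  refine Forces.ask (e := s(p 0, p (2 * ((k - 1) / 2))))
    (h.not_isDiag (by omega) (by omega) (by omega)) (fun B₂ hB₂ h₂ => ?_) fun B₂ hB₂ h₂ => ?_
  · exact .of_win ((t₁.mono hB₂).win_of_red_fan (a := 1) hk (by omega) (by omega) (by omega)
      (by omega) ((t₁.mono hB₂).red_mem (by omega) (by omega) (by omega)) h₂) _
  have t₂ := t₁.mono hB₂
  refine (t₂.forces_of_search (r := 4) (Nat.log 2 m + 1) (by omega) hMm.2.2 ?_ hMm.1 h₂
    (hB₂.1 h₁) fun i B₃ hi hiM hB₃ h0i h0j => ?_).mono (by omega)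
  · have := Nat.lt_pow_succ_log_self (b := 2) (by omega) m
    omega
  · exact (t₂.mono hB₃).forces_endgame hk hodd hm hM hi hiM (hB₃.1 (hB₂.1 h₁)) h0i h0j

theorem forces_dragonWin (h : DragonTail m p B) (hk : 3 ≤ k) (hm : k < m) :
    Forces (DragonWin k m p) (Nat.log 2 m + 7) B := by
  rcases Nat.mod_two_eq_zero_or_one k with heven | hodd
  · exact (h.forces_of_even hk hm heven).mono (by omega)
  · exact h.forces_of_odd hk hm hodd

end DragonTail

/-- The vertices of the red path `u 0, w 1, u 1, w 2, …` of a dragon tail. -/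
def zigzag (u w : ℕ → ℕ) (n : ℕ) : ℕ := if n % 2 = 0 then u (n / 2) else w (n / 2 + 1)

theorem zigzag_even (u w : ℕ → ℕ) (n : ℕ) : zigzag u w (2 * n) = u n := by
  simp [zigzag]

theorem zigzag_odd (u w : ℕ → ℕ) (n : ℕ) : zigzag u w (2 * n + 1) = w (n + 1) := by
  rw [zigzag, if_neg (by omega), show (2 * n + 1) / 2 = n by omega]

theorem zigzag_injOn {m : ℕ} {u w : ℕ → ℕ}
    (hu : ∀ x y, x ≤ m → y ≤ m → u x = u y → x = y)
    (hw : ∀ x y, 1 ≤ x → x ≤ m → 1 ≤ y → y ≤ m → w x = w y → x = y)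
    (hdisj : ∀ x y, x ≤ m → 1 ≤ y → y ≤ m → u x ≠ w y) (x y : ℕ) (hx : x ≤ 2 * m)
    (hy : y ≤ 2 * m) (e : zigzag u w x = zigzag u w y) : x = y := by
  unfold zigzag at e
  split_ifs at e
  · have := hu _ _ (by omega) (by omega) e
    omega
  · exact absurd e (hdisj _ _ (by omega) (by omega) (by omega))
  · exact absurd e.symm (hdisj _ _ (by omega) (by omega) (by omega))
  · have := hw _ _ (by omega) (by omega) (by omega) (by omega) e
    omega

/-- Dragon tail to blue cycle via binary search: starting from a dragon tail of
length `m > k ≥ 3` with first blue edge `u 0 – u 1`, within fewer than `log₂ m + 8`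
rounds Builder can force a red `C_k` or a blue cycle on more than `m - k` but at most
`m + 1` vertices of the dragon tail containing the edge `u 0 – u 1`. -/
theorem dragon_tail_to_cycle (k m : ℕ) (hk : 3 ≤ k) (hm : k < m)
    (u w : ℕ → ℕ)
    (hu : ∀ x y, x ≤ m → y ≤ m → u x = u y → x = y)
    (hw : ∀ x y, 1 ≤ x → x ≤ m → 1 ≤ y → y ≤ m → w x = w y → x = y)
    (hdisj : ∀ x y, x ≤ m → 1 ≤ y → y ≤ m → u x ≠ w y) :
    ∃ t : ℕ, (t : ℝ) < Real.logb 2 m + 8 ∧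
      BuilderWinsIn
        ({e | ∃ i : ℕ, i < m ∧
           (e = s(u i, w (i + 1)) ∨ e = s(w (i + 1), u (i + 1)))},
         {e | ∃ i : ℕ, i < m ∧ e = s(u i, u (i + 1))})
        (fun B => RedCopy (SimpleGraph.cycleGraph k) B ∨
          ∃ (ℓ : ℕ) (g : ℕ → ℕ), m - k < ℓ ∧ ℓ ≤ m + 1 ∧
            (∀ a c, a < ℓ → c < ℓ → g a = g c → a = c) ∧
            (∀ j, j + 1 < ℓ → s(g j, g (j + 1)) ∈ B.2) ∧
            s(g (ℓ - 1), g 0) ∈ B.2 ∧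
            (∀ a, a < ℓ → (∃ i, i ≤ m ∧ g a = u i) ∨
              (∃ i, 1 ≤ i ∧ i ≤ m ∧ g a = w i)) ∧
            (∃ a, a < ℓ ∧ ((g a = u 0 ∧ g ((a + 1) % ℓ) = u 1) ∨
              (g a = u 1 ∧ g ((a + 1) % ℓ) = u 0))))
        t := by
  refine ⟨Nat.log 2 m + 7, ?_, ?_⟩
  · have := Real.natLog_le_logb m 2
    push_cast at this ⊢
    linarith
  have tail : DragonTail m (zigzag u w)
      ({e | ∃ i : ℕ, i < m ∧ (e = s(u i, w (i + 1)) ∨ e = s(w (i + 1), u (i + 1)))},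
        {e | ∃ i : ℕ, i < m ∧ e = s(u i, u (i + 1))}) := by
    refine ⟨zigzag_injOn hu hw hdisj, fun j hj => ?_, fun j hj => ⟨j, hj, ?_⟩⟩
    · refine ⟨j / 2, by omega, ?_⟩
      obtain ⟨n, rfl | rfl⟩ : ∃ n, j = 2 * n ∨ j = 2 * n + 1 := ⟨j / 2, by omega⟩
      · left
        rw [zigzag_even, zigzag_odd, show 2 * n / 2 = n by omega]
      · right
        rw [show 2 * n + 1 + 1 = 2 * (n + 1) by ring, zigzag_even, zigzag_odd,
          show (2 * n + 1) / 2 = n by omega]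
    · rw [show 2 * j + 2 = 2 * (j + 1) by ring, zigzag_even, zigzag_even]
  obtain ⟨b, hvalid, hb⟩ := (tail.forces_dragonWin hk hm).builderWinsIn (by
    refine Set.Finite.subset (s := (fun i => s(u i, w (i + 1))) '' Set.Iio m ∪
      (fun i => s(w (i + 1), u (i + 1))) '' Set.Iio m ∪
      (fun i => s(u i, u (i + 1))) '' Set.Iio m) ?_ ?_
    · exact (((Set.finite_Iio m).image _).union ((Set.finite_Iio m).image _)).union
        ((Set.finite_Iio m).image _)
    · rintro e (⟨i, hi, rfl | rfl⟩ | ⟨i, hi, rfl⟩)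
      · exact Or.inl (Or.inl ⟨i, hi, rfl⟩)
      · exact Or.inl (Or.inr ⟨i, hi, rfl⟩)
      · exact Or.inr ⟨i, hi, rfl⟩)
  refine ⟨b, hvalid, fun q => ?_⟩
  obtain ⟨s, hs, hW⟩ := hb q
  refine ⟨s, hs, hW.imp id ?_⟩
  rintro ⟨ℓ, σ, hl, hl', hσ, hcyc, a, ha, hedge⟩
  refine ⟨ℓ, fun a => zigzag u w (σ a), hl, hl', hcyc.inj, hcyc.step, hcyc.close, ?_, a, ha, ?_⟩
  · intro c hc
    have := hσ c hc
    obtain ⟨n, hn | hn⟩ : ∃ n, σ c = 2 * n ∨ σ c = 2 * n + 1 := ⟨σ c / 2, by omega⟩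
    · exact Or.inl ⟨n, by omega, by simp only [hn, zigzag_even]⟩
    · exact Or.inr ⟨n + 1, by omega, by omega, by simp only [hn, zigzag_odd]⟩
  · have h0 : zigzag u w 0 = u 0 := zigzag_even u w 0
    have h2 : zigzag u w 2 = u 1 := zigzag_even u w 1
    rcases hedge with ⟨e, e'⟩ | ⟨e, e'⟩
    · exact Or.inl ⟨by simp only [e, h0], by simp only [e', h2]⟩
    · exact Or.inr ⟨by simp only [e, h2], by simp only [e', h0]⟩
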